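/- Let X be a database of size N in ℝ^d and let t ≥ 0 and 0 ≤ t' < t be integers. For every database X_t of size N with H(X,X_t) = t and every database X_t' of size N with H(X_t,X_t') = 1, |q_count(X_t,k,r) − q_count(X_t',k,r)| ≤ min( N, max( U^{(t)}_{t'}(X,k,r), U^{(t)}_{t'}(X,k−1,r) ) + t + 1 ). -/

import Mathlib

open Finset
open scoped Classical

noncomputable section

/-- A point of `ℝ^d`. -/
abbrev Pt (d : ℕ) := EuclideanSpace ℝ (Fin d)

/-- Hamming distance between two databases of size `N`: the number of differing records. -/
def hamming {N d : ℕ} (X X' : Fin N → Pt d) : ℕ :=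
  (univ.filter fun i => X i ≠ X' i).card

/-- The degree of record `i` in `X`: the number of other records within distance `r`. -/
def deg {N d : ℕ} (X : Fin N → Pt d) (r : ℝ) (i : Fin N) : ℕ :=
  (univ.filter fun j => j ≠ i ∧ ‖X j - X i‖ ≤ r).card

/-- The number of outlier records: records with fewer than `k` neighbors within radius `r`. -/
def qCount {N d : ℕ} (X : Fin N → Pt d) (k : ℕ) (r : ℝ) : ℕ :=
  (univ.filter fun i => deg X r i < k).card

/-- `V(X,m,r)`: the set of record indices of degree exactly `m` (empty for `m < 0`). -/
def Vset {N d : ℕ} (X : Fin N → Pt d) (r : ℝ) (m : ℤ) : Finset (Fin N) :=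
  univ.filter fun i => (deg X r i : ℤ) = m

/-- `CV(X,x,m,r)`: the set of degree-`m` record indices within distance `r` of `x`
(empty for `m < 0`). -/
def CV {N d : ℕ} (X : Fin N → Pt d) (x : Pt d) (m : ℤ) (r : ℝ) : Finset (Fin N) :=
  (Vset X r m).filter fun i => ‖X i - x‖ ≤ r

/-- The union `⋃_{j ≥ 0, |j−m| ≤ t} CV(X,x,j,r)` (terms with `j < 0` are empty). -/
def CVUnion {N d : ℕ} (X : Fin N → Pt d) (x : Pt d) (m : ℤ) (t : ℕ) (r : ℝ) :
    Finset (Fin N) :=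
  (Finset.Icc (m - t) (m + t)).biUnion fun j => CV X x j r

/-- `C^{(t)}(X,x,m,r) = |⋃_{j ≥ 0, |j−m| ≤ t} CV(X,x,j,r)|`. -/
def Ct {N d : ℕ} (X : Fin N → Pt d) (x : Pt d) (m : ℤ) (t : ℕ) (r : ℝ) : ℕ :=
  (CVUnion X x m t r).card

/-- `U^{(t)}_{t'}(X,m,r) = (sup_{x ∈ ℝ^d} C^{(t')}(X,x,m,r))
  + |⋃_{j ≥ 0, t' < |j−m| ≤ t} V(X,j,r)|`. -/
def Uval {N d : ℕ} (X : Fin N → Pt d) (m : ℤ) (t' t : ℕ) (r : ℝ) : ℕ :=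
  sSup {n : ℕ | ∃ x : Pt d, n = Ct X x m t' r} +
    (((Finset.Icc (m - t) (m + t)).filter fun j => (t' : ℤ) < |j - m|).biUnion
      fun j => Vset X r j).card

/-!
Suppose `Y` and `Z` differ only in record `s`, and `i ≠ s` is an outlier of `Y` but not of `Z`.
Then its degree is exactly `k - 1` in `Y` and exactly `k` in `Z`, and `s` must have become a
neighbor of `i`, so that all such `i` lie within `r` of the point `Z s`. Degrees of unchanged
records are `1`-Lipschitz in the Hamming distance, hence, up to the at most `t` records changed on
the way from `X`, these `i` have degree within `t` of `k - 1` (or of `k`) in `X` and are counted by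
`C^{(t)}`. Dropping the distance condition for degrees that deviate by more than `t'` bounds
`C^{(t)}` by `U^{(t)}_{t'}`. The outliers lost and those gained partially cancel in the count, so
the larger of the two bounds suffices; the term `t + 1` pays for the changed records and `s`.
-/

theorem abs_card_sub_card_le_max_card_sdiff {α : Type*} [DecidableEq α] (A B : Finset α) :
    |(#A : ℤ) - #B| ≤ (max #(A \ B) #(B \ A) : ℕ) := by
  have hAB : #A - #B ≤ #(A \ B) := le_card_sdiff B A
  have hBA : #B - #A ≤ #(B \ A) := le_card_sdiff A B
  rw [abs_le]
  omega

section Databases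

variable {N d : ℕ} {X Y Z : Fin N → Pt d} {k t : ℕ} {r : ℝ} {i s : Fin N}

theorem hamming_comm (X Y : Fin N → Pt d) : hamming X Y = hamming Y X := by
  simp only [hamming, ne_comm]

theorem exists_forall_ne_eq_of_hamming_eq_one (h : hamming Y Z = 1) :
    ∃ s, ∀ j ≠ s, Y j = Z j := by
  obtain ⟨s, hs⟩ := card_eq_one.mp h
  refine ⟨s, fun j hj => by_contra fun hYZ => hj ?_⟩
  exact mem_singleton.mp (hs ▸ mem_filter.mpr ⟨mem_univ j, hYZ⟩)

theorem hamming_le_one_of_forall_ne_eq (h : ∀ j ≠ s, Y j = Z j) : hamming Y Z ≤ 1 := by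
  refine (card_le_card fun j hj => ?_).trans (card_singleton s).le
  exact mem_singleton.mpr (not_imp_comm.mp (h j) (mem_filter.mp hj).2)

theorem deg_le_deg_add_hamming (h : X i = Y i) : deg X r i ≤ deg Y r i + hamming X Y := by
  refine (card_le_card fun j hj => ?_).trans (card_union_le _ _)
  simp only [mem_union, mem_filter, mem_univ, true_and] at hj ⊢
  by_cases hXY : X j = Y j
  · exact Or.inl (by rwa [← hXY, ← h])
  · exact Or.inr hXY

theorem abs_deg_sub_deg_le_hamming (h : X i = Y i) :
    |(deg X r i : ℤ) - deg Y r i| ≤ hamming X Y := by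
  have hXY : deg X r i ≤ deg Y r i + hamming X Y := deg_le_deg_add_hamming h
  have hYX : deg Y r i ≤ deg X r i + hamming X Y := hamming_comm Y X ▸ deg_le_deg_add_hamming h.symm
  rw [abs_le]
  omega

theorem exists_changed_neighbor_of_deg_lt (h : Y i = Z i) (hlt : deg Y r i < deg Z r i) :
    ∃ j, Y j ≠ Z j ∧ ‖Z j - Z i‖ ≤ r := by
  obtain ⟨j, hjZ, hjY⟩ := exists_mem_notMem_of_card_lt_card hlt
  simp only [mem_filter, mem_univ, true_and] at hjZ hjY
  exact ⟨j, fun hYZ => hjY (by rwa [hYZ, h]), hjZ.2⟩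

theorem mem_CV {x : Pt d} {m : ℤ} : i ∈ CV X x m r ↔ (deg X r i : ℤ) = m ∧ ‖X i - x‖ ≤ r := by
  simp only [CV, Vset, mem_filter, mem_univ, true_and]

theorem mem_CVUnion {x : Pt d} {m : ℤ} :
    i ∈ CVUnion X x m t r ↔ |(deg X r i : ℤ) - m| ≤ t ∧ ‖X i - x‖ ≤ r := by
  simp only [CVUnion, mem_biUnion, mem_CV, mem_Icc, abs_le]
  constructor
  · rintro ⟨_, hj, rfl, hx⟩
    exact ⟨by omega, hx⟩
  · rintro ⟨hm, hx⟩
    exact ⟨_, by omega, rfl, hx⟩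

theorem Ct_le_sSup (X : Fin N → Pt d) (x : Pt d) (m : ℤ) (t : ℕ) (r : ℝ) :
    Ct X x m t r ≤ sSup {n : ℕ | ∃ x : Pt d, n = Ct X x m t r} := by
  refine le_csSup ⟨N, ?_⟩ ⟨x, rfl⟩
  rintro _ ⟨y, rfl⟩
  exact card_finset_fin_le _

theorem Ct_le_Uval (X : Fin N → Pt d) (x : Pt d) (m : ℤ) (t' t : ℕ) (r : ℝ) :
    Ct X x m t r ≤ Uval X m t' t r := by
  refine le_trans (card_le_card (t := CVUnion X x m t' r ∪ _) fun i hi => ?_)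
    ((card_union_le _ _).trans (Nat.add_le_add_right (Ct_le_sSup X x m t' r) _))
  obtain ⟨hdeg, hx⟩ := mem_CVUnion.mp hi
  rcases le_or_gt |(deg X r i : ℤ) - m| t' with hnear | hfar
  · exact mem_union_left _ (mem_CVUnion.mpr ⟨hnear, hx⟩)
  · rw [abs_le] at hdeg
    refine mem_union_right _ (mem_biUnion.mpr ⟨deg X r i, ?_, ?_⟩)
    · exact mem_filter.mpr ⟨mem_Icc.mpr (by omega), hfar⟩
    · exact mem_filter.mpr ⟨mem_univ i, rfl⟩

theorem card_CV_le_Ct_add_hamming (hXY : hamming X Y ≤ t) (x : Pt d) (m : ℤ) (r : ℝ) :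
    #(CV Y x m r) ≤ Ct X x m t r + hamming X Y := by
  refine (card_le_card fun i hi => ?_).trans (card_union_le _ _)
  obtain ⟨rfl, hx⟩ := mem_CV.mp hi
  by_cases h : X i = Y i
  · have hdeg : |(deg X r i : ℤ) - deg Y r i| ≤ t :=
      (abs_deg_sub_deg_le_hamming h).trans (by exact_mod_cast hXY)
    exact mem_union_left _ (mem_CVUnion.mpr ⟨hdeg, h ▸ hx⟩)
  · exact mem_union_right _ (mem_filter.mpr ⟨mem_univ i, h⟩)

/-- The set of outlier records, whose cardinality is `qCount X k r`. -/
def outliers (X : Fin N → Pt d) (k : ℕ) (r : ℝ) : Finset (Fin N) :=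
  univ.filter fun i => deg X r i < k

theorem mem_CV_of_mem_outliers_sdiff (hs : ∀ j ≠ s, Y j = Z j) (his : i ≠ s)
    (hi : i ∈ outliers Y k r \ outliers Z k r) :
    i ∈ CV Y (Z s) (k - 1) r ∧ i ∈ CV Z (Z s) k r := by
  simp only [outliers, mem_sdiff, mem_filter, mem_univ, true_and, not_lt] at hi
  have hYZ : Y i = Z i := hs i his
  have hdeg : deg Z r i ≤ deg Y r i + 1 :=
    (deg_le_deg_add_hamming hYZ.symm).trans <| Nat.add_le_add_left
      (hamming_comm Y Z ▸ hamming_le_one_of_forall_ne_eq hs) _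
  obtain ⟨j, hj, hnear⟩ := exists_changed_neighbor_of_deg_lt hYZ (hi.1.trans_le hi.2)
  obtain rfl : j = s := not_imp_comm.mp (hs j) hj
  rw [norm_sub_rev] at hnear
  exact ⟨mem_CV.mpr ⟨by omega, hYZ ▸ hnear⟩, mem_CV.mpr ⟨by omega, hnear⟩⟩

theorem card_le_Uval_add_of_subset_insert_CV (hXY : hamming X Y ≤ t) (t' : ℕ) {A : Finset (Fin N)}
    {x : Pt d} {m : ℤ} (hA : A ⊆ insert s (CV Y x m r)) : #A ≤ Uval X m t' t r + t + 1 :=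
  calc #A ≤ #(CV Y x m r) + 1 := (card_le_card hA).trans (card_insert_le _ _)
    _ ≤ Ct X x m t r + hamming X Y + 1 := by gcongr; exact card_CV_le_Ct_add_hamming hXY x m r
    _ ≤ Uval X m t' t r + t + 1 := by gcongr; exact Ct_le_Uval X x m t' t r

theorem card_outliers_sdiff_le_of_left (t' : ℕ) (hXY : hamming X Y ≤ t) (hs : ∀ j ≠ s, Y j = Z j) :
    #(outliers Y k r \ outliers Z k r) ≤ Uval X (k - 1) t' t r + t + 1 :=
  card_le_Uval_add_of_subset_insert_CV hXY t' fun _ hi => mem_insert.mpr <|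
    or_iff_not_imp_left.mpr fun his => (mem_CV_of_mem_outliers_sdiff hs his hi).1

theorem card_outliers_sdiff_le_of_right (t' : ℕ) (hXZ : hamming X Z ≤ t)
    (hs : ∀ j ≠ s, Y j = Z j) :
    #(outliers Y k r \ outliers Z k r) ≤ Uval X k t' t r + t + 1 :=
  card_le_Uval_add_of_subset_insert_CV hXZ t' fun _ hi => mem_insert.mpr <|
    or_iff_not_imp_left.mpr fun his => (mem_CV_of_mem_outliers_sdiff hs his hi).2

theorem abs_qCount_sub_qCount_le (Y Z : Fin N → Pt d) (k : ℕ) (r : ℝ) :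
    |(qCount Y k r : ℤ) - qCount Z k r| ≤ N :=
  abs_sub_le_of_nonneg_of_le (Nat.cast_nonneg _) (Nat.cast_le.mpr (card_finset_fin_le _))
    (Nat.cast_nonneg _) (Nat.cast_le.mpr (card_finset_fin_le _))

/-- At `t' = t` the far part of `Uval` is empty, and the bound is the sharper one by
`sup_x C^{(t)}`. -/
theorem local_sensitivity_t_Uval_bound_general (t' : ℕ) (hXY : hamming X Y ≤ t)
    (hYZ : hamming Y Z = 1) :
    |(qCount Y k r : ℤ) - (qCount Z k r : ℤ)| ≤
      min (N : ℤ)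
        (((max (Uval X (k : ℤ) t' t r) (Uval X ((k : ℤ) - 1) t' t r) : ℕ) : ℤ) + t + 1) := by
  obtain ⟨s, hs⟩ := exists_forall_ne_eq_of_hamming_eq_one hYZ
  have hlost : #(outliers Y k r \ outliers Z k r) ≤ Uval X (k - 1) t' t r + t + 1 :=
    card_outliers_sdiff_le_of_left t' hXY hs
  have hgained : #(outliers Z k r \ outliers Y k r) ≤ Uval X k t' t r + t + 1 :=
    card_outliers_sdiff_le_of_right t' hXY fun j hj => (hs j hj).symm
  have hcount : |(qCount Y k r : ℤ) - qCount Z k r| ≤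
      (max #(outliers Y k r \ outliers Z k r) #(outliers Z k r \ outliers Y k r) : ℕ) :=
    abs_card_sub_card_le_max_card_sdiff _ _
  refine le_min (abs_qCount_sub_qCount_le Y Z k r) (hcount.trans ?_)
  omega

end Databases

/-- Computable upper bound on the `t`-step local sensitivity: if `H(X,X_t) = t` and
`H(X_t,X_t') = 1`, then the change in the outlier count is at most
`min( N, max( U^{(t)}_{t'}(X,k,r), U^{(t)}_{t'}(X,k−1,r) ) + t + 1 )`. -/
theorem local_sensitivity_t_Uval_bound
    (d N k t t' : ℕ) (hd : 1 ≤ d) (hk : 1 ≤ k) (r : ℝ) (hr : 0 < r) (ht' : t' < t)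
    (X Xt Xt' : Fin N → Pt d) (hH : hamming X Xt = t) (hH' : hamming Xt Xt' = 1) :
    |(qCount Xt k r : ℤ) - (qCount Xt' k r : ℤ)| ≤
      min (N : ℤ)
        (((max (Uval X (k : ℤ) t' t r) (Uval X ((k : ℤ) - 1) t' t r) : ℕ) : ℤ) + t + 1) :=
  local_sensitivity_t_Uval_bound_general t' hH.le hH'
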